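/- Let M be a multimarket oligopoly with firms N = {1,…,n}, markets E, market access sets E_i ⊆ E, price functions p_{i,e} : ℝ → ℝ, and production costs C_i(t) = c_i·t² with c_i ≥ 0. Fix reals d_i > 0 for each firm, introduce n pairwise distinct new resources e_1,…,e_n (disjoint from E), and define for each firm i the resource set Ẽ_i = E_i ∪ {e_i}, cost functions c_{i,e}(t) = −p_{i,e}(t) for e ∈ E_i and c_{i,e_i}(t) = c_i·(t − 2d_i), and the map φ_i(x_i) = (x_i, d_i − Σ_{e∈E_i} x_{i,e}). Then for every strategy profile x = (x_i)_{i∈N} with x_i ∈ ℝ^{E_i}_{≥0}, and for every firm i: u_i(x) = −π_i(φ_1(x_1),…,φ_n(x_n)) − c_i·d_i², where π_i(x') = Σ_{e∈Ẽ_i} c_{i,e}(x'_e)·x'_{i,e} and x'_e denotes the total load of all players on resource e (in particular x'_{e_i} = x'_{i,e_i} since only player i uses e_i, and x'_e = x_e for e ∈ E). -/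

import Mathlib

open Finset

/-- Total quantity offered on market `e`: the sum of the productions of all
firms having access to `e`. -/
noncomputable def marketLoad {N E : Type*} [Fintype N] [DecidableEq E]
    (Emkt : N → Finset E) (x : N → E → ℝ) (e : E) : ℝ :=
  ∑ i ∈ Finset.univ.filter (fun i => e ∈ Emkt i), x i e

/-- Utility of firm `i` in the multimarket oligopoly with quadratic production
costs `C_i(t) = c_i t²`. -/
noncomputable def cournotUtil {N E : Type*} [Fintype N] [DecidableEq E]
    (Emkt : N → Finset E) (p : N → E → ℝ → ℝ) (cc : N → ℝ)
    (x : N → E → ℝ) (i : N) : ℝ :=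
  ∑ e ∈ Emkt i, p i e (marketLoad Emkt x e) * x i e -
    cc i * (∑ e ∈ Emkt i, x i e) ^ 2

/-- The transformation `φ_i(x_i) = (x_i, d_i − Σ_{e∈E_i} x_{i,e})` of a Cournot
strategy into a strategy on the extended resource set `E ⊕ N`, where `Sum.inr i`
is the firm-specific extra resource `e_i`. -/
noncomputable def cournotPhi {N E : Type*} [Fintype E] [DecidableEq E] [DecidableEq N]
    (Emkt : N → Finset E) (d : N → ℝ) (x : N → E → ℝ) :
    N → (E ⊕ N) → ℝ :=
  fun i r =>
    match r with
    | Sum.inl e => x i e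
    | Sum.inr j => if j = i then d i - ∑ e ∈ Emkt i, x i e else 0

/-- Player-specific cost functions of the constructed atomic splittable game:
`c_{i,e}(t) = −p_{i,e}(t)` on the markets and `c_{i,e_i}(t) = c_i (t − 2 d_i)`
on the extra resource of firm `i`. -/
def cournotCost {N E : Type*} (p : N → E → ℝ → ℝ) (cc : N → ℝ) (d : N → ℝ) :
    N → (E ⊕ N) → ℝ → ℝ :=
  fun i r t =>
    match r with
    | Sum.inl e => -(p i e t)
    | Sum.inr _ => cc i * (t - 2 * d i)

/-- The allowable resource set `Ẽ_i = E_i ∪ {e_i}` of player `i`. -/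
def cournotResources {N E : Type*} [DecidableEq E] [DecidableEq N]
    (Emkt : N → Finset E) (i : N) : Finset (E ⊕ N) :=
  (Emkt i).image Sum.inl ∪ {Sum.inr i}

/-- Cost `π_i` of player `i` in the constructed atomic splittable game. -/
noncomputable def cournotPi {N E : Type*} [Fintype N] [Fintype E]
    [DecidableEq E] [DecidableEq N]
    (Emkt : N → Finset E) (p : N → E → ℝ → ℝ) (cc : N → ℝ) (d : N → ℝ)
    (y : N → (E ⊕ N) → ℝ) (i : N) : ℝ :=
  ∑ r ∈ cournotResources Emkt i, cournotCost p cc d i r (∑ j, y j r) * y i r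

/-! The cost incurred on the extra resource `e_i` is a difference of squares: with
`S = Σ_{e∈E_i} x_{i,e}`, the load there is `d_i − S`, so firm `i` pays
`c_i ((d_i − S) − 2 d_i) (d_i − S) = c_i (S² − d_i²)`. This is the production cost up to a constant;
the remaining resources contribute exactly the negated revenue. -/

section

variable {N E : Type*} [DecidableEq E]

lemma marketLoad_eq_sum [Fintype N] (Emkt : N → Finset E) {x : N → E → ℝ} {e : E}
    (hx : ∀ i, e ∉ Emkt i → x i e = 0) :
    marketLoad Emkt x e = ∑ i, x i e :=
  Finset.sum_filter_of_ne fun i _ => not_imp_comm.mp (hx i)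

variable [DecidableEq N]

lemma sum_cournotResources {R : Type*} [AddCommMonoid R] (Emkt : N → Finset E) (i : N)
    (f : E ⊕ N → R) :
    ∑ r ∈ cournotResources Emkt i, f r = ∑ e ∈ Emkt i, f (Sum.inl e) + f (Sum.inr i) := by
  have hdisj : Disjoint ((Emkt i).image (Sum.inl : E → E ⊕ N)) {Sum.inr i} := by simp
  rw [cournotResources, Finset.sum_union hdisj, Finset.sum_image Sum.inl_injective.injOn,
    Finset.sum_singleton]

variable [Fintype E]

lemma cournotPhi_inr_self (Emkt : N → Finset E) (d : N → ℝ) (x : N → E → ℝ) (i : N) :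
    cournotPhi Emkt d x i (Sum.inr i) = d i - ∑ e ∈ Emkt i, x i e :=
  if_pos rfl

variable [Fintype N]

lemma sum_cournotPhi_inr (Emkt : N → Finset E) (d : N → ℝ) (x : N → E → ℝ) (i : N) :
    ∑ j, cournotPhi Emkt d x j (Sum.inr i) = d i - ∑ e ∈ Emkt i, x i e :=
  Fintype.sum_ite_eq i _

lemma cournotPi_eq (Emkt : N → Finset E) (p : N → E → ℝ → ℝ) (cc d : N → ℝ)
    (y : N → E ⊕ N → ℝ) (i : N) :
    cournotPi Emkt p cc d y i =
      -∑ e ∈ Emkt i, p i e (∑ j, y j (Sum.inl e)) * y i (Sum.inl e) +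
        cc i * (∑ j, y j (Sum.inr i) - 2 * d i) * y i (Sum.inr i) := by
  simp only [cournotPi, sum_cournotResources, cournotCost, neg_mul, Finset.sum_neg_distrib]

lemma cournotPi_cournotPhi (Emkt : N → Finset E) (p : N → E → ℝ → ℝ) (cc d : N → ℝ)
    (x : N → E → ℝ) (i : N) :
    cournotPi Emkt p cc d (cournotPhi Emkt d x) i =
      -∑ e ∈ Emkt i, p i e (∑ j, x j e) * x i e +
        cc i * ((∑ e ∈ Emkt i, x i e) ^ 2 - d i ^ 2) := by
  rw [cournotPi_eq, sum_cournotPhi_inr, cournotPhi_inr_self]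
  simp only [cournotPhi]
  ring

theorem stmt_11_general (Emkt : N → Finset E) (p : N → E → ℝ → ℝ) (cc d : N → ℝ)
    (x : N → E → ℝ) (hxs : ∀ i e, e ∉ Emkt i → x i e = 0) (i : N) :
    cournotUtil Emkt p cc x i =
      -(cournotPi Emkt p cc d (cournotPhi Emkt d x) i) - cc i * (d i) ^ 2 := by
  have hload (e : E) : marketLoad Emkt x e = ∑ j, x j e :=
    marketLoad_eq_sum Emkt fun j => hxs j e
  simp only [cournotUtil, hload, cournotPi_cournotPhi]
  ring

end

/-- The computational core of Theorem 2 of the paper: for every strategy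
profile of the multimarket oligopoly, the utility of firm `i` equals the
negated cost of player `i` in the constructed atomic splittable singleton
congestion game minus the constant `c_i d_i²`. -/
theorem stmt_11 {N E : Type*} [Fintype N] [Fintype E] [DecidableEq E] [DecidableEq N]
    (Emkt : N → Finset E)
    (p : N → E → ℝ → ℝ)
    (cc : N → ℝ) (hcc : ∀ i, 0 ≤ cc i)
    (d : N → ℝ) (hd : ∀ i, 0 < d i)
    (x : N → E → ℝ)
    (hx0 : ∀ i e, 0 ≤ x i e)
    (hxs : ∀ i e, e ∉ Emkt i → x i e = 0)
    (i : N) :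
    cournotUtil Emkt p cc x i =
      -(cournotPi Emkt p cc d (cournotPhi Emkt d x) i) - cc i * (d i) ^ 2 :=
  stmt_11_general Emkt p cc d x hxs i
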